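/- arXiv:2407.10708 — 2 statements merged into one kernel-verified Lean document; each statement's English description precedes it below -/
import Mathlib

section
/- Fix integers d ≥ 2, q with 1 ≤ q ≤ d-1, γ with 0 ≤ γ ≤ q-1, and reals K < 0, u > 0. Then for every δ > 0 one has F_{K,u}(δ) = ∫_0^δ f(s) ds, where f(s) := (D(d,q,γ)·ω_{d-γ}/C_K(d,d-q+γ,u)) · R_K(s)^{q-γ-1}·cosh^{-2}(√(-K)·s) · ∫_0^{min(1, R_K(u)/R_K(s))} z^q·(1-z²)^{(d-q)/2-1}·(1+K·R_K(s)²·z²)^{-(d+1)/2} dz. In particular, on (0,∞) the law of the distance d_K(o,E∩L) is absolutely continuous with density f. -/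
open Real MeasureTheory Filter Asymptotics

/-- Surface area `ω_n = 2 π^{n/2} / Γ(n/2)` of the Euclidean unit sphere in `ℝ^n`. -/
noncomputable def omegaS (n : ℕ) : ℝ := 2 * Real.pi ^ ((n : ℝ) / 2) / Real.Gamma ((n : ℝ) / 2)

/-- The constant `D(d,q,γ)`. -/
noncomputable def Dconst (d q γ : ℕ) : ℝ :=
  omegaS (γ + 1) * omegaS (q - γ) * omegaS (d - q) / (omegaS (d - q + γ + 1) * omegaS (d - γ))

/-- `R_K(x)`, the Euclidean (Beltrami–Klein) radius of a hyperbolic ball of radius `x`. -/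
noncomputable def RK (K x : ℝ) : ℝ :=
  Real.sinh (Real.sqrt (-K) * x) /
    (Real.sqrt (-K) * Real.sqrt (1 + Real.sinh (Real.sqrt (-K) * x) ^ 2))

/-- `C_K(d,m,u)`, the invariant measure of the `m`-flats meeting the ball of radius `u`. -/
noncomputable def Cconst (K : ℝ) (d m : ℕ) (u : ℝ) : ℝ :=
  omegaS (d - m) * Real.sqrt (-K) ^ (-(d : ℝ) + (m : ℝ) + 1) *
    ∫ r in (0:ℝ)..u,
      Real.cosh (Real.sqrt (-K) * r) ^ m * Real.sinh (Real.sqrt (-K) * r) ^ (d - m - 1)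

/-- `P(d,q,γ,K,u)`, the hyperbolic intersection probability of the random flats `E` and `L`. -/
noncomputable def Pprob (d q γ : ℕ) (K u : ℝ) : ℝ :=
  Dconst d q γ * omegaS (d - γ) / Cconst K d (d - q + γ) u *
    ∫ r in (0:ℝ)..(1 / Real.sqrt (-K)),
      r ^ ((q : ℝ) - (γ : ℝ) - 1) *
        ∫ z in (0:ℝ)..(min 1 (RK K u / r)),
          z ^ q * (1 - z ^ 2) ^ (((d : ℝ) - (q : ℝ)) / 2 - 1) *
            (1 + K * r ^ 2 * z ^ 2) ^ (-((d : ℝ) + 1) / 2)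

/-- `F_{K,u}(δ)`, the distribution function of the distance of `E ∩ L` to the origin. -/
noncomputable def Fdist (d q γ : ℕ) (K u δ : ℝ) : ℝ :=
  Dconst d q γ * omegaS (d - γ) / Cconst K d (d - q + γ) u *
    ∫ r in (0:ℝ)..(RK K δ),
      r ^ ((q : ℝ) - (γ : ℝ) - 1) *
        ∫ z in (0:ℝ)..(min 1 (RK K u / r)),
          z ^ q * (1 - z ^ 2) ^ (((d : ℝ) - (q : ℝ)) / 2 - 1) *
            (1 + K * r ^ 2 * z ^ 2) ^ (-((d : ℝ) + 1) / 2)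

/-- `f_{d,q,γ,K}(δ)`, the density of the distance of `E ∩ L` to the origin. -/
noncomputable def fdens (d q γ : ℕ) (K u δ : ℝ) : ℝ :=
  Dconst d q γ * omegaS (d - γ) / Cconst K d (d - q + γ) u *
    (RK K δ ^ ((q : ℝ) - (γ : ℝ) - 1) / Real.cosh (Real.sqrt (-K) * δ) ^ 2) *
    ∫ z in (0:ℝ)..(min 1 (RK K u / RK K δ)),
      z ^ q * (1 - z ^ 2) ^ (((d : ℝ) - (q : ℝ)) / 2 - 1) *
        (1 + K * RK K δ ^ 2 * z ^ 2) ^ (-((d : ℝ) + 1) / 2)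

/-- The limiting constant `ρ(u,q,γ,κ)` in the critical phase. -/
noncomputable def rhoConst (u : ℝ) (q γ : ℕ) (κ : ℝ) : ℝ :=
  omegaS (γ + 1) * (2 * Real.pi) ^ (-((γ : ℝ) + 1) / 2) * u ^ (q + 1) *
    κ ^ (((γ : ℝ) + 1) / 2) *
    (∫ s in (0:ℝ)..u, Real.exp (κ * s ^ 2 / 2) * s ^ ((q : ℝ) - (γ : ℝ) - 1))⁻¹ *
    ∫ r in (0:ℝ)..1,
      r ^ ((q : ℝ) - (γ : ℝ) - 1) *
        ∫ v in (0:ℝ)..(1 / r),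
          v ^ q * Real.exp (-(1 / 2) * u ^ 2 * κ * v ^ 2 * (1 - r ^ 2))

/-!
In the Beltrami–Klein model the Euclidean distance of `E ∩ L` to the origin has an explicit density,
and a hyperbolic distance `s` corresponds to the Euclidean one `R_K(s) = tanh (√(-K) s) / √(-K)`,
whose derivative is `1 / cosh² (√(-K) s) ≥ 0`. Substituting `r = R_K(s)` gives the claim; for a
monotone substitution the integrand needs no regularity, so neither the singularity of the inner
integrand at `z = 1` nor the kink of `min 1 (R_K(u) / r)` has to be examined.
-/

theorem hasDerivAt_tanh (x : ℝ) : HasDerivAt tanh (1 / cosh x ^ 2) x := by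
  have hquot := (hasDerivAt_sinh x).div (hasDerivAt_cosh x) (cosh_pos x).ne'
  rw [← pow_two, ← pow_two, cosh_sq_sub_sinh_sq] at hquot
  rwa [show tanh = sinh / cosh from funext tanh_eq_sinh_div_cosh]

theorem RK_eq_tanh_div (K x : ℝ) : RK K x = tanh (√(-K) * x) / √(-K) := by
  rw [RK, ← cosh_sq', sqrt_sq (cosh_pos _).le, div_mul_eq_div_div_swap, ← tanh_eq_sinh_div_cosh]

theorem RK_zero (K : ℝ) : RK K 0 = 0 := by
  rw [RK_eq_tanh_div, mul_zero, tanh_zero, zero_div]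

theorem hasDerivAt_RK {K : ℝ} (hK : K < 0) (x : ℝ) :
    HasDerivAt (RK K) (1 / cosh (√(-K) * x) ^ 2) x := by
  have hsqrt : √(-K) ≠ 0 := (sqrt_pos.2 (neg_pos.2 hK)).ne'
  have hscaled :=
    ((hasDerivAt_tanh (√(-K) * x)).comp x (hasDerivAt_const_mul (√(-K)))).div_const (√(-K))
  rw [mul_div_cancel_right₀ _ hsqrt] at hscaled
  rwa [funext (RK_eq_tanh_div K)]

theorem integral_comp_RK {E : Type*} [NormedAddCommGroup E] [NormedSpace ℝ E]
    {K : ℝ} (hK : K < 0) (g : ℝ → E) (a b : ℝ) :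
    ∫ s in a..b, (1 / cosh (√(-K) * s) ^ 2) • g (RK K s) = ∫ r in RK K a..RK K b, g r :=
  intervalIntegral.integral_deriv_smul_comp_of_deriv_nonneg
    (fun x _ => (hasDerivAt_RK hK x).continuousAt.continuousWithinAt)
    (fun x _ => hasDerivAt_RK hK x)
    (fun _ _ => by positivity)

/-- The density of the Euclidean distance of `E ∩ L` to the origin in the Beltrami–Klein model,
i.e. the integrand in `r` of `F_{K,u}`, including the normalizing constant. -/
noncomputable def kleinRadiusDensity (d q γ : ℕ) (K u r : ℝ) : ℝ :=
  Dconst d q γ * omegaS (d - γ) / Cconst K d (d - q + γ) u *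
    (r ^ ((q : ℝ) - (γ : ℝ) - 1) *
      ∫ z in (0:ℝ)..(min 1 (RK K u / r)),
        z ^ q * (1 - z ^ 2) ^ (((d : ℝ) - (q : ℝ)) / 2 - 1) *
          (1 + K * r ^ 2 * z ^ 2) ^ (-((d : ℝ) + 1) / 2))

theorem Fdist_eq_integral_kleinRadiusDensity (d q γ : ℕ) (K u δ : ℝ) :
    Fdist d q γ K u δ = ∫ r in (0:ℝ)..RK K δ, kleinRadiusDensity d q γ K u r :=
  (intervalIntegral.integral_const_mul _ _).symm

theorem fdens_eq_smul_kleinRadiusDensity (d q γ : ℕ) (K u s : ℝ) :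
    fdens d q γ K u s = (1 / cosh (√(-K) * s) ^ 2) • kleinRadiusDensity d q γ K u (RK K s) := by
  rw [fdens, kleinRadiusDensity, smul_eq_mul]
  ring

/-- the distribution function of the distance is the integral of the density,
i.e. on `(0,∞)` the law of the distance is absolutely continuous with density `f`. -/
theorem distribution_eq_integral_density (d q γ : ℕ) (hd : 2 ≤ d) (hq1 : 1 ≤ q)
    (hq2 : q ≤ d - 1) (hγ : γ ≤ q - 1) (K u : ℝ) (hK : K < 0) (hu : 0 < u) :
    ∀ δ : ℝ, 0 < δ → Fdist d q γ K u δ = ∫ s in (0:ℝ)..δ, fdens d q γ K u s := by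
  intro δ _
  calc Fdist d q γ K u δ
      = ∫ r in RK K 0..RK K δ, kleinRadiusDensity d q γ K u r := by
        rw [Fdist_eq_integral_kleinRadiusDensity, RK_zero]
    _ = ∫ s in (0:ℝ)..δ, (1 / cosh (√(-K) * s) ^ 2) • kleinRadiusDensity d q γ K u (RK K s) :=
        (integral_comp_RK hK _ 0 δ).symm
    _ = ∫ s in (0:ℝ)..δ, fdens d q γ K u s := by
        simp only [fdens_eq_smul_kleinRadiusDensity]
end

section
/- Fix integers q ≥ 1 and γ with 0 ≤ γ ≤ q-1, reals u > 0 and κ ∈ (0,∞), and for each integer d ≥ 2 a real K(d) < 0 with lim_{d→∞} (-K(d))·d = κ. Then lim_{d→∞} d^{(q+1)/2} · ∫_0^1 r^{q-γ-1} · ∫_0^{min(1, tanh(√(-K(d))·u)/r)} z^q·(1-z²)^{(d-q)/2-1}·(1-r²z²)^{-(d+1)/2} dz dr = u^{q+1}·κ^{(q+1)/2} · ∫_0^1 r^{q-γ-1} ∫_0^{1/r} v^q · exp(-(1/2)·u²·κ·v²·(1-r²)) dv dr. -/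
open Real MeasureTheory Filter Asymptotics

/-!
Substituting `z = t * v` with `t = tanh (√(-K) * u)` pulls the factor `t ^ (q + 1)` out of the inner
integral, and since `d * t ^ 2 → m = u ^ 2 * κ`, this factor compensates `d ^ ((q + 1) / 2)`. The
remaining integrand `v ^ q * (1 - x) ^ a * (1 - r ^ 2 * x) ^ b` with `x = (t * v) ^ 2`,
`a = (d - q) / 2 - 1` and `b = -(d + 1) / 2` converges to
`v ^ q * exp (-(1 / 2) * m * v ^ 2 * (1 - r ^ 2))`, because `a * x → m * v ^ 2 / 2` and
`b * x → -(m * v ^ 2 / 2)`.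

Dominated convergence applies because `a + b` does not depend on `d`: for `y = r ^ 2 * x` the
inequality `1 - x ≤ (1 - y) * exp (-(x - y))` bounds the integrand by a constant times
`v ^ q * exp (-c * v ^ 2 * (1 - r ^ 2))` as soon as `c ≤ a * t ^ 2`, which holds eventually for
`c = m / 4`. On the domain `v ≤ 1 / r` this is at most `v ^ q * exp c * exp (-c * v ^ 2)`, a bound
which is uniform in `r`.
-/

section

open Set
open scoped Topology

variable {ι : Type*} {l : Filter ι}

lemma hasDerivAt_tanh_zero : HasDerivAt tanh 1 0 := by
  have hdiv : HasDerivAt (fun x ↦ sinh x / cosh x) 1 0 := by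
    simpa using (hasDerivAt_sinh 0).fun_div (hasDerivAt_cosh 0) (cosh_pos 0).ne'
  simpa only [← tanh_eq_sinh_div_cosh] using hdiv

lemma tanh_isEquivalent_id : tanh ~[𝓝 0] id := by
  simpa [Function.comp_def] using! hasDerivAt_tanh_zero.isEquivalent_sub one_ne_zero

lemma tanh_pos_of_pos {x : ℝ} (hx : 0 < x) : 0 < tanh x := by
  rw [tanh_eq_sinh_div_cosh]
  exact div_pos (sinh_pos_iff.2 hx) (cosh_pos x)

lemma log_one_sub_isEquivalent_neg : (fun x ↦ log (1 - x)) ~[𝓝 0] fun x ↦ -x := by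
  have hlog : HasDerivAt (fun x : ℝ ↦ log (1 - x)) (-1) 0 := by
    simpa using ((hasDerivAt_id (0 : ℝ)).const_sub 1).log (by norm_num)
  simpa [Function.comp_def] using! hlog.isEquivalent_sub (by norm_num)

lemma tendsto_one_sub_rpow_exp_neg {x e : ι → ℝ} {c : ℝ} (hx : Tendsto x l (𝓝 0))
    (hex : Tendsto (fun i ↦ e i * x i) l (𝓝 c)) :
    Tendsto (fun i ↦ (1 - x i) ^ e i) l (𝓝 (exp (-c))) := by
  have hlog : Tendsto (fun i ↦ log (1 - x i) * e i) l (𝓝 (-c)) := by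
    refine ((log_one_sub_isEquivalent_neg.comp_tendsto hx).mul
      (IsEquivalent.refl (u := e))).symm.tendsto_nhds (hex.neg.congr fun i ↦ ?_)
    simp [mul_comm]
  refine hlog.rexp.congr' ?_
  filter_upwards [hx.eventually_lt_const one_pos] with i hi
  rw [rpow_def_of_pos (sub_pos.2 hi)]

lemma tendsto_zero_of_tendsto_mul_sq {d s : ι → ℝ} {m : ℝ} (hd : Tendsto d l atTop)
    (hds : Tendsto (fun i ↦ d i * s i ^ 2) l (𝓝 m)) : Tendsto s l (𝓝 0) := by
  have hsq : Tendsto (fun i ↦ s i ^ 2) l (𝓝 0) := by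
    refine (hds.div_atTop hd).congr' ?_
    filter_upwards [hd.eventually_ne_atTop 0] with i hi using mul_div_cancel_left₀ _ hi
  rw [tendsto_zero_iff_abs_tendsto_zero]
  simpa [sqrt_sq_eq_abs, Function.comp_def] using hsq.sqrt

lemma tendsto_mul_tanh_sq {d s : ι → ℝ} {m : ℝ} (hs : Tendsto s l (𝓝 0))
    (hds : Tendsto (fun i ↦ d i * s i ^ 2) l (𝓝 m)) :
    Tendsto (fun i ↦ d i * tanh (s i) ^ 2) l (𝓝 m) :=
  ((IsEquivalent.refl (u := d)).mul
    ((tanh_isEquivalent_id.comp_tendsto hs).pow 2)).symm.tendsto_nhds hds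

lemma sq_rpow_div_two {x : ℝ} (hx : 0 ≤ x) (y : ℝ) : (x ^ 2) ^ (y / 2) = x ^ y := by
  rw [rpow_div_two_eq_sqrt _ (sq_nonneg x), sqrt_sq hx]

lemma one_sub_rpow_mul_one_sub_rpow_le {x y a b e : ℝ} (hy : 0 ≤ y) (hyx : y ≤ x) (hx : x ≤ 1)
    (hy_half : y ≤ 1 / 2) (ha : 0 ≤ a) (he : 0 ≤ e) (hab : a + b = -e) :
    (1 - x) ^ a * (1 - y) ^ b ≤ 2 ^ e * exp (-(x - y) * a) := by
  have hy_pos : 0 < 1 - y := by linarith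
  have hbase : 1 - x ≤ (1 - y) * exp (-(x - y)) :=
    calc 1 - x ≤ (1 - y) * (1 - (x - y)) := by nlinarith
      _ ≤ (1 - y) * exp (-(x - y)) := by gcongr; exact one_sub_le_exp_neg _
  have hpow : (1 - y) ^ (-e) ≤ 2 ^ e :=
    calc (1 - y) ^ (-e) ≤ (1 / 2 : ℝ) ^ (-e) :=
          rpow_le_rpow_of_nonpos (by norm_num) (by linarith) (by linarith)
      _ = 2 ^ e := by rw [one_div, inv_rpow two_pos.le, rpow_neg two_pos.le, inv_inv]
  calc (1 - x) ^ a * (1 - y) ^ b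
      ≤ ((1 - y) * exp (-(x - y))) ^ a * (1 - y) ^ b := by
        gcongr
    _ = (1 - y) ^ (-e) * exp (-(x - y) * a) := by
        rw [mul_rpow hy_pos.le (exp_pos _).le, ← exp_mul, ← hab, rpow_add hy_pos]
        ring
    _ ≤ 2 ^ e * exp (-(x - y) * a) := by gcongr

lemma setIntegral_Ioi_indicator_Iic {E : Type*} [NormedAddCommGroup E] [NormedSpace ℝ E] {x y : ℝ}
    (hxy : x ≤ y) (f : ℝ → E) :
    ∫ v in Ioi x, (Iic y).indicator f v = ∫ v in x..y, f v := by
  rw [setIntegral_indicator measurableSet_Iic, Ioi_inter_Iic, intervalIntegral.integral_of_le hxy]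

lemma tendsto_setIntegral_mul_setIntegral_of_dominated {α β : Type*} [MeasurableSpace α]
    [MeasurableSpace β] {μ : Measure α} {ν : Measure β} [SFinite ν] [l.IsCountablyGenerated]
    {s : Set α} {t : Set β} (hs : MeasurableSet s) (ht : MeasurableSet t) {w : α → ℝ}
    (hw : IntegrableOn w s μ) {F : ι → α → β → ℝ} {f : α → β → ℝ} {B : β → ℝ}
    (hF : ∀ i, StronglyMeasurable (Function.uncurry (F i))) (hB : IntegrableOn B t ν)
    (hFB : ∀ᶠ i in l, ∀ x ∈ s, ∀ y ∈ t, ‖F i x y‖ ≤ B y)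
    (hFf : ∀ x ∈ s, ∀ y ∈ t, Tendsto (fun i ↦ F i x y) l (𝓝 (f x y))) :
    Tendsto (fun i ↦ ∫ x in s, w x * ∫ y in t, F i x y ∂ν ∂μ) l
      (𝓝 (∫ x in s, w x * ∫ y in t, f x y ∂ν ∂μ)) := by
  have hinner : ∀ x ∈ s, Tendsto (fun i ↦ ∫ y in t, F i x y ∂ν) l (𝓝 (∫ y in t, f x y ∂ν)) := by
    intro x hx
    refine tendsto_integral_filter_of_dominated_convergence B
      (.of_forall fun i ↦ ((hF i).comp_measurable measurable_prodMk_left).aestronglyMeasurable)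
      ?_ hB (ae_restrict_of_forall_mem ht (hFf x hx))
    filter_upwards [hFB] with i hi using ae_restrict_of_forall_mem ht (hi x hx)
  refine tendsto_integral_filter_of_dominated_convergence (fun x ↦ ‖w x‖ * ∫ y in t, B y ∂ν)
    (.of_forall fun i ↦ hw.aestronglyMeasurable.mul (hF i).integral_prod_right.aestronglyMeasurable)
    ?_ (hw.norm.mul_const _)
    (ae_restrict_of_forall_mem hs fun x hx ↦ (hinner x hx).const_mul (w x))
  filter_upwards [hFB] with i hi
  refine ae_restrict_of_forall_mem hs fun x hx ↦ ?_
  rw [norm_mul]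
  gcongr
  exact norm_integral_le_of_norm_le hB (ae_restrict_of_forall_mem ht (hi x hx))

/-- The integrand of the inner integral after the substitution `z = t * v`, divided by `t ^ q`.
It is extended by zero beyond the endpoint `min (1 / t) (1 / r)`, so that it can be integrated over
the fixed domain `v > 0`. -/
noncomputable def rescaledIntegrand (q t a b r v : ℝ) : ℝ :=
  (Iic (min (1 / t) (1 / r))).indicator
    (fun v ↦ v ^ q * (1 - (t * v) ^ 2) ^ a * (1 - r ^ 2 * (t * v) ^ 2) ^ b) v

/-- The pointwise limit of `rescaledIntegrand` as `t → 0` with `a * t ^ 2 → m / 2` and `a + b`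
fixed. -/
noncomputable def limitIntegrand (q m r v : ℝ) : ℝ :=
  (Iic (1 / r)).indicator (fun v ↦ v ^ q * exp (-(1 / 2) * m * v ^ 2 * (1 - r ^ 2))) v

lemma measurable_uncurry_rescaledIntegrand (q t a b : ℝ) :
    Measurable (Function.uncurry (rescaledIntegrand q t a b)) := by
  have hset : MeasurableSet {p : ℝ × ℝ | p.2 ≤ min (1 / t) (1 / p.1)} :=
    measurableSet_le (by fun_prop) (by fun_prop)
  exact Measurable.indicator (f := fun p : ℝ × ℝ ↦
    p.2 ^ q * (1 - (t * p.2) ^ 2) ^ a * (1 - p.1 ^ 2 * (t * p.2) ^ 2) ^ b) (by fun_prop) hset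

lemma integral_eq_rpow_mul_integral_rescaledIntegrand (q a b : ℝ) {t r : ℝ} (ht : 0 < t)
    (hr : 0 < r) :
    ∫ z in (0 : ℝ)..min 1 (t / r), z ^ q * (1 - z ^ 2) ^ a * (1 - r ^ 2 * z ^ 2) ^ b =
      t ^ (q + 1) * ∫ v in Ioi 0, rescaledIntegrand q t a b r v := by
  have hmin : 0 ≤ min (1 / t) (1 / r) := by positivity
  have hend : min 1 (t / r) = t * min (1 / t) (1 / r) := by
    rw [mul_min_of_nonneg _ _ ht.le, mul_one_div_cancel ht.ne', mul_one_div]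
  calc ∫ z in (0 : ℝ)..min 1 (t / r), z ^ q * (1 - z ^ 2) ^ a * (1 - r ^ 2 * z ^ 2) ^ b
      = t * ∫ v in (0 : ℝ)..min (1 / t) (1 / r),
          (t * v) ^ q * (1 - (t * v) ^ 2) ^ a * (1 - r ^ 2 * (t * v) ^ 2) ^ b := by
        rw [intervalIntegral.mul_integral_comp_mul_left
          (f := fun z ↦ z ^ q * (1 - z ^ 2) ^ a * (1 - r ^ 2 * z ^ 2) ^ b), mul_zero, hend]
    _ = t * ∫ v in (0 : ℝ)..min (1 / t) (1 / r),
          t ^ q * (v ^ q * (1 - (t * v) ^ 2) ^ a * (1 - r ^ 2 * (t * v) ^ 2) ^ b) := by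
        congr 1
        refine intervalIntegral.integral_congr fun v hv ↦ ?_
        rw [uIcc_of_le hmin] at hv
        simp only [mul_rpow ht.le hv.1, mul_assoc]
    _ = t ^ (q + 1) * ∫ v in Ioi 0, rescaledIntegrand q t a b r v := by
        simp only [rescaledIntegrand, setIntegral_Ioi_indicator_Iic hmin,
          intervalIntegral.integral_const_mul, rpow_add_one ht.ne']
        ring

section Domination

variable {q t a b r v c e : ℝ}

lemma rescaledIntegrand_nonneg (ht : 0 < t) (hr : 0 < r) (hr_one : r ≤ 1) (hv : 0 < v) :
    0 ≤ rescaledIntegrand q t a b r v := by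
  refine indicator_apply_nonneg fun hmem ↦ ?_
  have htv : t * v ≤ 1 := (le_div_iff₀' ht).1 (hmem.trans (min_le_left _ _))
  have hx : (t * v) ^ 2 ≤ 1 := pow_le_one₀ (by positivity) htv
  have hy : r ^ 2 * (t * v) ^ 2 ≤ 1 := mul_le_one₀ (pow_le_one₀ hr.le hr_one) (sq_nonneg _) hx
  exact mul_nonneg (mul_nonneg (rpow_nonneg hv.le q) (rpow_nonneg (sub_nonneg.2 hx) a))
    (rpow_nonneg (sub_nonneg.2 hy) b)

lemma rescaledIntegrand_le (ht : 0 < t) (ht_half : t ^ 2 ≤ 1 / 2) (hr : 0 < r) (hr_one : r ≤ 1)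
    (hv : 0 < v) (ha : 0 ≤ a) (hc : 0 ≤ c) (hca : c ≤ a * t ^ 2) (he : 0 ≤ e)
    (hab : a + b = -e) :
    rescaledIntegrand q t a b r v ≤ 2 ^ e * exp c * (v ^ q * exp (-c * v ^ 2)) := by
  refine indicator_apply_le' (fun hmem ↦ ?_) fun _ ↦ by positivity
  have htv : t * v ≤ 1 := (le_div_iff₀' ht).1 (hmem.trans (min_le_left _ _))
  have hrv : r * v ≤ 1 := (le_div_iff₀' hr).1 (hmem.trans (min_le_right _ _))
  have hrv_sq : (r * v) ^ 2 ≤ 1 := pow_le_one₀ (by positivity) hrv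
  have hr_sq : r ^ 2 ≤ 1 := pow_le_one₀ hr.le hr_one
  have hy_half : r ^ 2 * (t * v) ^ 2 ≤ 1 / 2 :=
    calc r ^ 2 * (t * v) ^ 2 = (r * v) ^ 2 * t ^ 2 := by ring
      _ ≤ 1 * (1 / 2) := by gcongr
      _ = 1 / 2 := one_mul _
  have hexponent : -((t * v) ^ 2 - r ^ 2 * (t * v) ^ 2) * a ≤ c + -c * v ^ 2 :=
    calc -((t * v) ^ 2 - r ^ 2 * (t * v) ^ 2) * a = -(a * t ^ 2 * (v ^ 2 * (1 - r ^ 2))) := by ring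
      _ ≤ -(c * (v ^ 2 * (1 - r ^ 2))) := by
        have : 0 ≤ 1 - r ^ 2 := sub_nonneg.2 hr_sq
        gcongr
      _ = c * (r * v) ^ 2 + -c * v ^ 2 := by ring
      _ ≤ c + -c * v ^ 2 := by gcongr; exact mul_le_of_le_one_right hc hrv_sq
  calc v ^ q * (1 - (t * v) ^ 2) ^ a * (1 - r ^ 2 * (t * v) ^ 2) ^ b
      = v ^ q * ((1 - (t * v) ^ 2) ^ a * (1 - r ^ 2 * (t * v) ^ 2) ^ b) := mul_assoc _ _ _
    _ ≤ v ^ q * (2 ^ e * exp (-((t * v) ^ 2 - r ^ 2 * (t * v) ^ 2) * a)) := by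
        refine mul_le_mul_of_nonneg_left ?_ (rpow_nonneg hv.le q)
        exact one_sub_rpow_mul_one_sub_rpow_le (by positivity)
          (mul_le_of_le_one_left (sq_nonneg _) hr_sq) (pow_le_one₀ (by positivity) htv) hy_half
          ha he hab
    _ ≤ v ^ q * (2 ^ e * exp (c + -c * v ^ 2)) := by gcongr
    _ = 2 ^ e * exp c * (v ^ q * exp (-c * v ^ 2)) := by rw [exp_add]; ring

end Domination

section Limit

variable {q m e : ℝ} {t a b : ι → ℝ}

lemma tendsto_rescaledIntegrand (ht : Tendsto t l (𝓝[>] 0))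
    (ha : Tendsto (fun i ↦ a i * t i ^ 2) l (𝓝 (m / 2))) (hab : ∀ i, a i + b i = -e) (r v : ℝ) :
    Tendsto (fun i ↦ rescaledIntegrand q (t i) (a i) (b i) r v) l
      (𝓝 (limitIntegrand q m r v)) := by
  have ht_zero : Tendsto t l (𝓝 0) := tendsto_nhds_of_tendsto_nhdsWithin ht
  have ht_sq : Tendsto (fun i ↦ t i ^ 2) l (𝓝 0) := by simpa using ht_zero.pow 2
  have hb : Tendsto (fun i ↦ b i * t i ^ 2) l (𝓝 (-(m / 2))) := by
    have hsub := (ht_sq.const_mul (-e)).sub ha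
    rw [mul_zero, zero_sub] at hsub
    exact hsub.congr fun i ↦ by rw [← hab i]; ring
  have hx_pow : Tendsto (fun i ↦ (1 - (t i * v) ^ 2) ^ a i) l (𝓝 (exp (-(m / 2 * v ^ 2)))) :=
    tendsto_one_sub_rpow_exp_neg (by simpa using (ht_zero.mul_const v).pow 2)
      ((ha.mul_const (v ^ 2)).congr fun i ↦ by ring)
  have hy_pow : Tendsto (fun i ↦ (1 - r ^ 2 * (t i * v) ^ 2) ^ b i) l
      (𝓝 (exp (-(-(m / 2) * (r ^ 2 * v ^ 2))))) :=
    tendsto_one_sub_rpow_exp_neg (by simpa using ((ht_zero.mul_const v).pow 2).const_mul (r ^ 2))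
      ((hb.mul_const (r ^ 2 * v ^ 2)).congr fun i ↦ by ring)
  have hexp : exp (-(m / 2 * v ^ 2)) * exp (-(-(m / 2) * (r ^ 2 * v ^ 2))) =
      exp (-(1 / 2) * m * v ^ 2 * (1 - r ^ 2)) := by rw [← exp_add]; ring_nf
  have hv_le : ∀ᶠ i in l, v ≤ 1 / t i := by
    filter_upwards [ht.eventually self_mem_nhdsWithin,
      (ht_zero.mul_const v).eventually_lt_const (zero_mul v ▸ one_pos)] with i hi hiv
    exact (le_div_iff₀' hi).2 hiv.le
  by_cases hvr : v ≤ 1 / r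
  · have hlim := (hx_pow.mul hy_pow).const_mul (v ^ q)
    rw [hexp] at hlim
    simp only [limitIntegrand, indicator_of_mem (mem_Iic.2 hvr)]
    refine hlim.congr' ?_
    filter_upwards [hv_le] with i hi
    rw [rescaledIntegrand, indicator_of_mem (mem_Iic.2 (le_min hi hvr)), mul_assoc]
  · have hvr_min (i : ι) : v ∉ Iic (min (1 / t i) (1 / r)) := fun hmem ↦
      hvr (hmem.trans (min_le_right _ _))
    simp only [limitIntegrand, rescaledIntegrand, indicator_of_notMem (hvr_min _),
      indicator_of_notMem (notMem_Iic.2 (not_le.1 hvr)), tendsto_const_nhds]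

lemma eventually_norm_rescaledIntegrand_le (hm : 0 < m) (he : 0 ≤ e) (ht : Tendsto t l (𝓝[>] 0))
    (ha : Tendsto (fun i ↦ a i * t i ^ 2) l (𝓝 (m / 2))) (hab : ∀ i, a i + b i = -e) :
    ∀ᶠ i in l, ∀ r ∈ Ioc (0 : ℝ) 1, ∀ v ∈ Ioi (0 : ℝ),
      ‖rescaledIntegrand q (t i) (a i) (b i) r v‖ ≤
        2 ^ e * exp (m / 4) * (v ^ q * exp (-(m / 4) * v ^ 2)) := by
  have ht_sq : Tendsto (fun i ↦ t i ^ 2) l (𝓝 0) := by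
    simpa using (tendsto_nhds_of_tendsto_nhdsWithin ht).pow 2
  filter_upwards [ht.eventually self_mem_nhdsWithin, ht_sq.eventually_le_const one_half_pos,
    ha.eventually_const_le (show m / 4 < m / 2 by linarith)] with i hi hi_half hai r hr v hv
  have hai_nonneg : 0 ≤ a i := nonneg_of_mul_nonneg_left (by linarith) (pow_pos hi 2)
  rw [norm_of_nonneg (rescaledIntegrand_nonneg hi hr.1 hr.2 hv)]
  exact rescaledIntegrand_le hi hi_half hr.1 hr.2 hv hai_nonneg (by positivity) hai he (hab i)

lemma tendsto_integral_rpow_mul_integral_rescaledIntegrand [l.IsCountablyGenerated] {p : ℝ}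
    (hq : -1 < q) (hp : -1 < p) (hm : 0 < m) (he : 0 ≤ e) (ht : Tendsto t l (𝓝[>] 0))
    (ha : Tendsto (fun i ↦ a i * t i ^ 2) l (𝓝 (m / 2))) (hab : ∀ i, a i + b i = -e) :
    Tendsto (fun i ↦ ∫ r in Ioc 0 1, r ^ p *
        ∫ v in Ioi 0, rescaledIntegrand q (t i) (a i) (b i) r v) l
      (𝓝 (∫ r in Ioc 0 1, r ^ p * ∫ v in Ioi 0, limitIntegrand q m r v)) :=
  tendsto_setIntegral_mul_setIntegral_of_dominated measurableSet_Ioc measurableSet_Ioi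
    ((intervalIntegrable_iff_integrableOn_Ioc_of_le zero_le_one).1
      (intervalIntegral.intervalIntegrable_rpow' hp))
    (fun _ ↦ (measurable_uncurry_rescaledIntegrand _ _ _ _).stronglyMeasurable)
    ((integrableOn_rpow_mul_exp_neg_mul_sq (by positivity) hq).const_mul _)
    (eventually_norm_rescaledIntegrand_le hm he ht ha hab)
    fun r _ v _ ↦ tendsto_rescaledIntegrand ht ha hab r v

end Limit

section Asymptotics

variable [l.IsCountablyGenerated] {p q : ℝ} {d : ι → ℝ}

theorem tendsto_rpow_mul_integral_of_tendsto_mul_sq (hq : -1 < q) (hp : -1 < p) {m : ℝ}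
    (hm : 0 < m) (hd : Tendsto d l atTop) {t : ι → ℝ} (ht : ∀ᶠ i in l, 0 < t i)
    (hdt : Tendsto (fun i ↦ d i * t i ^ 2) l (𝓝 m)) :
    Tendsto (fun i ↦ d i ^ ((q + 1) / 2) *
        ∫ r in (0 : ℝ)..1, r ^ p *
          ∫ z in (0 : ℝ)..min 1 (t i / r),
            z ^ q * (1 - z ^ 2) ^ ((d i - q) / 2 - 1) * (1 - r ^ 2 * z ^ 2) ^ (-(d i + 1) / 2)) l
      (𝓝 (m ^ ((q + 1) / 2) *
        ∫ r in (0 : ℝ)..1, r ^ p *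
          ∫ v in (0 : ℝ)..1 / r, v ^ q * exp (-(1 / 2) * m * v ^ 2 * (1 - r ^ 2)))) := by
  have ht_zero : Tendsto t l (𝓝 0) := tendsto_zero_of_tendsto_mul_sq hd hdt
  have ha : Tendsto (fun i ↦ ((d i - q) / 2 - 1) * t i ^ 2) l (𝓝 (m / 2)) := by
    have hsub := (hdt.div_const 2).sub ((ht_zero.pow 2).const_mul (q / 2 + 1))
    rw [zero_pow two_ne_zero, mul_zero, sub_zero] at hsub
    exact hsub.congr fun i ↦ by ring
  have hfactor : Tendsto (fun i ↦ (d i * t i ^ 2) ^ ((q + 1) / 2)) l (𝓝 (m ^ ((q + 1) / 2))) :=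
    hdt.rpow_const (.inl hm.ne')
  have hintegral := tendsto_integral_rpow_mul_integral_rescaledIntegrand hq hp hm
    (show 0 ≤ (q + 3) / 2 by linarith) (tendsto_nhdsWithin_iff.2 ⟨ht_zero, ht⟩) ha
    (b := fun i ↦ -(d i + 1) / 2) fun i ↦ by ring
  have hlimit : ∫ r in Ioc (0 : ℝ) 1, r ^ p * ∫ v in Ioi 0, limitIntegrand q m r v =
      ∫ r in Ioc (0 : ℝ) 1, r ^ p *
        ∫ v in (0 : ℝ)..1 / r, v ^ q * exp (-(1 / 2) * m * v ^ 2 * (1 - r ^ 2)) :=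
    setIntegral_congr_fun measurableSet_Ioc fun r hr ↦ congrArg (r ^ p * ·)
      (setIntegral_Ioi_indicator_Iic (one_div_nonneg.2 hr.1.le) _)
  simp only [intervalIntegral.integral_of_le (zero_le_one' ℝ), ← hlimit]
  refine (hfactor.mul hintegral).congr' ?_
  filter_upwards [ht, hd.eventually_ge_atTop 0] with i hti hdi
  rw [mul_rpow hdi (sq_nonneg _), sq_rpow_div_two hti.le, mul_assoc, ← integral_const_mul]
  congr 1
  refine setIntegral_congr_fun measurableSet_Ioc fun r hr ↦ ?_
  simp only [integral_eq_rpow_mul_integral_rescaledIntegrand q _ _ hti hr.1]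
  ring

theorem critical_integral_asymptotics_general (hq : -1 < q) (hp : -1 < p) {u κ : ℝ} (hu : 0 < u)
    (hκ : 0 < κ) (hd : Tendsto d l atTop) {K : ι → ℝ}
    (hK : Tendsto (fun i ↦ -K i * d i) l (𝓝 κ)) :
    Tendsto (fun i ↦ d i ^ ((q + 1) / 2) *
        ∫ r in (0 : ℝ)..1, r ^ p *
          ∫ z in (0 : ℝ)..min 1 (tanh (√(-K i) * u) / r),
            z ^ q * (1 - z ^ 2) ^ ((d i - q) / 2 - 1) * (1 - r ^ 2 * z ^ 2) ^ (-(d i + 1) / 2)) l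
      (𝓝 (u ^ (q + 1) * κ ^ ((q + 1) / 2) *
        ∫ r in (0 : ℝ)..1, r ^ p *
          ∫ v in (0 : ℝ)..1 / r, v ^ q * exp (-(1 / 2) * u ^ 2 * κ * v ^ 2 * (1 - r ^ 2)))) := by
  have hK_neg : ∀ᶠ i in l, 0 < -K i := by
    filter_upwards [hK.eventually_const_lt hκ, hd.eventually_gt_atTop 0] with i hKd hdi
    exact pos_of_mul_pos_left hKd hdi.le
  have hds : Tendsto (fun i ↦ d i * (√(-K i) * u) ^ 2) l (𝓝 (u ^ 2 * κ)) := by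
    refine (hK.const_mul (u ^ 2)).congr' ?_
    filter_upwards [hK_neg] with i hi
    rw [mul_pow, sq_sqrt hi.le]
    ring
  have htanh_pos : ∀ᶠ i in l, 0 < tanh (√(-K i) * u) := by
    filter_upwards [hK_neg] with i hi using tanh_pos_of_pos (mul_pos (sqrt_pos.2 hi) hu)
  have hlim := tendsto_rpow_mul_integral_of_tendsto_mul_sq hq hp (by positivity) hd htanh_pos
    (tendsto_mul_tanh_sq (tendsto_zero_of_tendsto_mul_sq hd hds) hds)
  simpa only [mul_rpow (sq_nonneg u) hκ.le, sq_rpow_div_two hu.le, ← mul_assoc] using hlim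

end Asymptotics

end

/-- exact asymptotics of the double integral in the critical regime. -/
theorem critical_integral_asymptotics (q γ : ℕ) (hq : 1 ≤ q) (hγ : γ ≤ q - 1) (u κ : ℝ)
    (hu : 0 < u) (hκ : 0 < κ) (K : ℕ → ℝ) (hK : ∀ d : ℕ, 2 ≤ d → K d < 0)
    (h : Tendsto (fun d : ℕ => -K d * (d : ℝ)) atTop (nhds κ)) :
    Tendsto (fun d : ℕ => (d : ℝ) ^ (((q : ℝ) + 1) / 2) *
        ∫ r in (0:ℝ)..1,
          r ^ ((q : ℝ) - (γ : ℝ) - 1) *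
            ∫ z in (0:ℝ)..(min 1 (Real.tanh (Real.sqrt (-K d) * u) / r)),
              z ^ q * (1 - z ^ 2) ^ (((d : ℝ) - (q : ℝ)) / 2 - 1) *
                (1 - r ^ 2 * z ^ 2) ^ (-((d : ℝ) + 1) / 2))
      atTop
      (nhds (u ^ (q + 1) * κ ^ (((q : ℝ) + 1) / 2) *
        ∫ r in (0:ℝ)..1,
          r ^ ((q : ℝ) - (γ : ℝ) - 1) *
            ∫ v in (0:ℝ)..(1 / r),
              v ^ q * Real.exp (-(1 / 2) * u ^ 2 * κ * v ^ 2 * (1 - r ^ 2)))) := by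
  have hp : (-1 : ℝ) < q - γ - 1 := by linarith [show (γ : ℝ) < q by exact_mod_cast (by omega)]
  exact_mod_cast critical_integral_asymptotics_general (q := q) (by linarith) hp hu hκ
    tendsto_natCast_atTop_atTop h
end
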